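/- (John–Nirenberg inequality for product Carleson measures.) Let $d \ge 1$, $1 < p < \infty$, and $\alpha : \mathcal{D}^d \to [0,\infty)$. Define $\|\alpha\|_{CM} = \sup_{\mathcal{U}} |\operatorname{sh}(\mathcal{U})|^{-1} \sum_{R \in \mathcal{U}} \alpha(R)$, the supremum over all collections $\mathcal{U}$ of dyadic rectangles with $0 < |\operatorname{sh}(\mathcal{U})| < \infty$. Then there is a constant $C_{p,d}$ such that for all such collections $\mathcal{U}$, $\big\| \sum_{R \in \mathcal{U}} \frac{\alpha(R)}{|R|} \mathbf{1}_R \big\|_{L^p} \le C_{p,d}\, \|\alpha\|_{CM}\, |\operatorname{sh}(\mathcal{U})|^{1/p}$. -/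

import Mathlib

open MeasureTheory Set

noncomputable section

/-- The dyadic interval `[j2^k, (j+1)2^k)`. -/
def dI (j k : ℤ) : Set ℝ := Set.Ico ((j:ℝ) * 2 ^ k) (((j:ℝ) + 1) * 2 ^ k)

/-- A dyadic rectangle in `ℝ^d`, encoded by the data `(j_i, k_i)` of its side in each
coordinate. -/
abbrev RectD (d : ℕ) := Fin d → ℤ × ℤ

/-- The dyadic rectangle of `ℝ^d` associated to the data `R`. -/
def rectD {d : ℕ} (R : RectD d) : Set (Fin d → ℝ) :=
  Set.univ.pi fun i => dI (R i).1 (R i).2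

/-- The shadow `⋃_{R ∈ 𝓤} R` of a collection of dyadic rectangles in `ℝ^d`. -/
def shD {d : ℕ} (𝓤 : Set (RectD d)) : Set (Fin d → ℝ) := ⋃ R ∈ 𝓤, rectD R

/-!
Write `F = ∑_{R ∈ 𝓤} α(R) |R|⁻¹ 1_R`. For `g ≥ 0`, the pairing `∫ F g` is the sum over `R ∈ 𝓤` of
`α(R)` times the average of `g` over `R`. These averages are at most `M g` on `R`, where `M` is the
strong maximal function, so the Carleson condition applied to the rectangles with average above `t`,
integrated over `t > 0`, gives `∫ F g ≤ A ∫_{sh 𝓤} M g`. Since `M` is bounded on `L^{p'}`, being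
dominated by iterated one-dimensional dyadic maximal functions, Hölder's inequality bounds this by
`C A |sh 𝓤|^{1/p} ‖g‖_{p'}`. For finite `𝓤` the norm of `F` is finite, and `g = F^{p-1}` gives the
claim; monotone convergence covers infinite `𝓤`.
-/

open scoped ENNReal

lemma rpow_eq_self_mul_rpow_sub_one (x : ℝ≥0∞) {q : ℝ} (hq : 1 ≤ q) :
    x ^ q = x * x ^ (q - 1) := by
  simpa using ENNReal.rpow_add_of_nonneg (x := x) 1 (q - 1) zero_le_one (sub_nonneg.2 hq)

section LayerCake

variable {X : Type*} [MeasurableSpace X] {μ : Measure X} {f : X → ℝ≥0∞}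

lemma lintegral_rpow_eq_lintegral_meas_ofReal_lt_of_ae_ne_top (hf : AEMeasurable f μ)
    (hfin : ∀ᵐ x ∂μ, f x ≠ ∞) {r : ℝ} (hr : 0 < r) :
    ∫⁻ x, f x ^ r ∂μ = ENNReal.ofReal r *
      ∫⁻ t in Ioi (0 : ℝ), μ {x | ENNReal.ofReal t < f x} * ENNReal.ofReal (t ^ (r - 1)) := by
  calc ∫⁻ x, f x ^ r ∂μ = ∫⁻ x, ENNReal.ofReal ((f x).toReal ^ r) ∂μ := by
        refine lintegral_congr_ae (hfin.mono fun x hx => ?_)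
        simp only [← ENNReal.ofReal_rpow_of_nonneg ENNReal.toReal_nonneg hr.le,
          ENNReal.ofReal_toReal hx]
    _ = ENNReal.ofReal r * ∫⁻ t in Ioi (0 : ℝ),
          μ {x | t < (f x).toReal} * ENNReal.ofReal (t ^ (r - 1)) :=
        lintegral_rpow_eq_lintegral_meas_lt_mul μ
          (Filter.Eventually.of_forall fun _ => ENNReal.toReal_nonneg) hf.ennreal_toReal hr
    _ = _ := by
        congr 1
        refine setLIntegral_congr_fun measurableSet_Ioi fun t ht => ?_
        congr 1
        refine measure_congr (hfin.mono fun x hx => ?_)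
        exact propext (ENNReal.ofReal_lt_iff_lt_toReal (le_of_lt ht) hx).symm

lemma lintegral_rpow_eq_iSup_lintegral_min_natCast (hf : Measurable f) {r : ℝ} (hr : 0 < r) :
    ∫⁻ x, f x ^ r ∂μ = ⨆ n : ℕ, ∫⁻ x, min (f x) n ^ r ∂μ := by
  rw [← lintegral_iSup (fun n => by fun_prop)
    fun m n hmn x => by dsimp only; gcongr]
  refine lintegral_congr fun x => ?_
  calc f x ^ r = (⨆ n : ℕ, min (f x) n) ^ r := by
        rw [← inf_iSup_eq, ENNReal.iSup_natCast, inf_top_eq]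
    _ = ⨆ n : ℕ, min (f x) n ^ r := (ENNReal.orderIsoRpow r hr).map_iSup _

theorem lintegral_rpow_eq_lintegral_meas_ofReal_lt (hf : Measurable f) {r : ℝ} (hr : 0 < r) :
    ∫⁻ x, f x ^ r ∂μ = ENNReal.ofReal r *
      ∫⁻ t in Ioi (0 : ℝ), μ {x | ENNReal.ofReal t < f x} * ENNReal.ofReal (t ^ (r - 1)) := by
  by_cases hfin : ∀ᵐ x ∂μ, f x ≠ ∞
  · exact lintegral_rpow_eq_lintegral_meas_ofReal_lt_of_ae_ne_top hf.aemeasurable hfin hr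
  have htop : ∫⁻ x, f x ^ r ∂μ = ∞ := by
    by_contra h
    refine hfin ((ae_lt_top (hf.pow_const r) h).mono fun x hx => ?_)
    exact ((ENNReal.rpow_lt_top_iff_of_pos hr).1 hx).ne
  refine le_antisymm ?_ (htop ▸ le_top)
  rw [lintegral_rpow_eq_iSup_lintegral_min_natCast hf hr]
  refine iSup_le fun n => ?_
  rw [lintegral_rpow_eq_lintegral_meas_ofReal_lt_of_ae_ne_top (by fun_prop)
    (Filter.Eventually.of_forall fun x => ne_top_of_le_ne_top (by simp) (min_le_right _ _)) hr]
  gcongr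
  exact min_le_left _ _

theorem lintegral_eq_lintegral_meas_ofReal_lt (hf : Measurable f) :
    ∫⁻ x, f x ∂μ = ∫⁻ t in Ioi (0 : ℝ), μ {x | ENNReal.ofReal t < f x} := by
  simpa using lintegral_rpow_eq_lintegral_meas_ofReal_lt (μ := μ) hf one_pos

lemma measurable_meas_ofReal_lt (μ : Measure X) (f : X → ℝ≥0∞) :
    Measurable fun t : ℝ => μ {x | ENNReal.ofReal t < f x} :=
  Antitone.measurable fun _ _ hst => measure_mono fun _ hx =>
    (ENNReal.ofReal_le_ofReal hst).trans_lt hx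

theorem lintegral_le_of_forall_meas_ofReal_lt_le {Y : Type*} [MeasurableSpace Y] {ν : Measure Y}
    {c : Y → ℝ≥0∞} (hc : Measurable c) (hf : Measurable f) (A : ℝ≥0∞)
    (h : ∀ t : ℝ, 0 < t → ν {y | ENNReal.ofReal t < c y} ≤ A * μ {x | ENNReal.ofReal t < f x}) :
    ∫⁻ y, c y ∂ν ≤ A * ∫⁻ x, f x ∂μ := by
  rw [lintegral_eq_lintegral_meas_ofReal_lt hc, lintegral_eq_lintegral_meas_ofReal_lt hf,
    ← lintegral_const_mul _ (measurable_meas_ofReal_lt μ f)]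
  exact setLIntegral_mono' measurableSet_Ioi h

lemma lintegral_withDensity_self_const_mul_rpow (hf : Measurable f) (b : ℝ≥0∞) {q : ℝ}
    (hq : 1 < q) :
    ∫⁻ x, (b * f x) ^ (q - 1) ∂μ.withDensity f = b ^ (q - 1) * ∫⁻ x, f x ^ q ∂μ := by
  rw [lintegral_withDensity_eq_lintegral_mul _ hf (by fun_prop),
    ← lintegral_const_mul _ (hf.pow_const q)]
  refine lintegral_congr fun x => ?_
  rw [Pi.mul_apply, ENNReal.mul_rpow_of_nonneg _ _ (sub_pos.2 hq).le,
    rpow_eq_self_mul_rpow_sub_one _ hq.le]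
  ring

theorem lintegral_rpow_le_of_mul_meas_ofReal_lt_le {g : X → ℝ≥0∞} (hf : Measurable f)
    (hg : Measurable g) (a b : ℝ≥0∞) {q : ℝ} (hq : 1 < q)
    (h : ∀ t : ℝ, 0 < t → ENNReal.ofReal t * μ {x | ENNReal.ofReal t < g x} ≤
      a * ∫⁻ x in {x | ENNReal.ofReal t < b * f x}, f x ∂μ) :
    ∫⁻ x, g x ^ q ∂μ ≤ ENNReal.ofReal (q / (q - 1)) * a * b ^ (q - 1) * ∫⁻ x, f x ^ q ∂μ := by
  have hq₁ : 0 < q - 1 := sub_pos.2 hq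
  set ν := μ.withDensity f
  have hν : ∀ t, ∫⁻ x in {x | ENNReal.ofReal t < b * f x}, f x ∂μ
      = ν {x | ENNReal.ofReal t < b * f x} := fun t =>
    (withDensity_apply f (measurableSet_lt measurable_const (hf.const_mul b))).symm
  have hweak : ∀ t ∈ Ioi (0 : ℝ), μ {x | ENNReal.ofReal t < g x} * ENNReal.ofReal (t ^ (q - 1)) ≤
      a * (ν {x | ENNReal.ofReal t < b * f x} * ENNReal.ofReal (t ^ (q - 1 - 1))) := by
    intro t (ht : 0 < t)
    have hsplit : t ^ (q - 1) = t * t ^ (q - 1 - 1) := by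
      rw [mul_comm, ← Real.rpow_add_one ht.ne', sub_add_cancel]
    rw [hsplit, ENNReal.ofReal_mul ht.le, ← mul_assoc, ← mul_assoc, ← hν, mul_comm (μ _)]
    gcongr ?_ * _
    exact h t ht
  have hcake := lintegral_rpow_eq_lintegral_meas_ofReal_lt (μ := ν) (hf.const_mul b) hq₁
  have hmeas : Measurable fun t : ℝ =>
      ν {x | ENNReal.ofReal t < b * f x} * ENNReal.ofReal (t ^ (q - 1 - 1)) :=
    (measurable_meas_ofReal_lt ν _).mul (by fun_prop)
  have hdiv : ENNReal.ofReal q = ENNReal.ofReal (q / (q - 1)) * ENNReal.ofReal (q - 1) := by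
    rw [← ENNReal.ofReal_mul (by positivity), div_mul_cancel₀ _ hq₁.ne']
  calc ∫⁻ x, g x ^ q ∂μ = ENNReal.ofReal q * ∫⁻ t in Ioi (0 : ℝ),
          μ {x | ENNReal.ofReal t < g x} * ENNReal.ofReal (t ^ (q - 1)) :=
        lintegral_rpow_eq_lintegral_meas_ofReal_lt hg (by linarith)
    _ ≤ ENNReal.ofReal q * ∫⁻ t in Ioi (0 : ℝ),
          a * (ν {x | ENNReal.ofReal t < b * f x} * ENNReal.ofReal (t ^ (q - 1 - 1))) := by
        gcongr ENNReal.ofReal q * ?_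
        exact setLIntegral_mono' measurableSet_Ioi hweak
    _ = ENNReal.ofReal (q / (q - 1)) * a * ∫⁻ x, (b * f x) ^ (q - 1) ∂ν := by
        rw [lintegral_const_mul _ hmeas, hcake, hdiv]
        ring
    _ = _ := by rw [lintegral_withDensity_self_const_mul_rpow hf b hq, mul_assoc (_ * a)]

end LayerCake

/-- A family of sets is laminar if any two of its members are disjoint or nested, as dyadic
intervals are. -/
def IsLaminar {X κ : Type*} (s : κ → Set X) : Prop :=
  ∀ i j, Disjoint (s i) (s j) ∨ s i ⊆ s j ∨ s j ⊆ s i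

lemma IsLaminar.exists_pairwiseDisjoint_biUnion_eq {X κ : Type*} {s : κ → Set X}
    (hs : IsLaminar s) (I : Finset κ) :
    ∃ J ⊆ I, (J : Set κ).PairwiseDisjoint s ∧ ⋃ i ∈ J, s i = ⋃ i ∈ I, s i := by
  classical
  obtain ⟨J, hJI, hJ⟩ :=
    exists_minimal_le_of_wellFoundedLT (fun J => ⋃ i ∈ J, s i = ⋃ i ∈ I, s i) I rfl
  have not_subset : ∀ i ∈ J, ∀ j ∈ J, i ≠ j → ¬ s i ⊆ s j := by
    intro i hi j hj hij hsub
    have hcover : s i ⊆ ⋃ k ∈ J.erase i, s k :=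
      hsub.trans (subset_biUnion_of_mem (u := s) (Finset.mem_erase.2 ⟨hij.symm, hj⟩))
    have hunion : ⋃ k ∈ J.erase i, s k = ⋃ k ∈ I, s k := by
      rw [← hJ.1]
      conv_rhs => rw [← Finset.insert_erase hi, Finset.set_biUnion_insert, union_eq_right.2 hcover]
    exact Finset.notMem_erase i J (hJ.2 hunion (J.erase_subset i) hi)
  refine ⟨J, hJI, fun i hi j hj hij => ?_, hJ.1⟩
  exact (hs i j).resolve_right
    (not_or.2 ⟨not_subset i hi j hj hij, not_subset j hj i hi hij.symm⟩)

section MaximalFunction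

variable {X κ : Type*} [MeasurableSpace X]

/-- The maximal function of `f` associated with a family `s` of sets: the supremum of the averages
of `f` over the members of the family containing the given point. Sets of measure `0` or `∞` are
harmless, because `⨍⁻` takes the value `0` on them. -/
def maximalFunction (μ : Measure X) (s : κ → Set X) (f : X → ℝ≥0∞) (x : X) : ℝ≥0∞ :=
  ⨆ i, (s i).indicator (fun _ => ⨍⁻ y in s i, f y ∂μ) x

variable {μ : Measure X} {s : κ → Set X} {f g : X → ℝ≥0∞}

lemma setLAverage_le_maximalFunction {i : κ} {x : X} (hx : x ∈ s i) :
    ⨍⁻ y in s i, f y ∂μ ≤ maximalFunction μ s f x := by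
  calc ⨍⁻ y in s i, f y ∂μ = (s i).indicator (fun _ => ⨍⁻ y in s i, f y ∂μ) x :=
        (indicator_of_mem hx fun _ => ⨍⁻ y in s i, f y ∂μ).symm
    _ ≤ maximalFunction μ s f x :=
        le_iSup (fun i => (s i).indicator (fun _ => ⨍⁻ y in s i, f y ∂μ) x) i

lemma maximalFunction_le {x : X} {c : ℝ≥0∞} (h : ∀ i, x ∈ s i → ⨍⁻ y in s i, f y ∂μ ≤ c) :
    maximalFunction μ s f x ≤ c :=
  iSup_le fun i => indicator_apply_le' (h i) fun _ => zero_le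

lemma setOf_lt_maximalFunction (c : ℝ≥0∞) :
    {x | c < maximalFunction μ s f x} = ⋃ i : {i // c < ⨍⁻ y in s i, f y ∂μ}, s i := by
  ext x
  simp only [maximalFunction, mem_ofPred_eq, lt_iSup_iff, mem_iUnion, Subtype.exists, exists_prop]
  refine exists_congr fun i => ?_
  by_cases hx : x ∈ s i <;> simp [hx]

lemma measurable_maximalFunction [Countable κ] (hs : ∀ i, MeasurableSet (s i)) :
    Measurable (maximalFunction μ s f) :=
  Measurable.iSup fun i => measurable_const.indicator (hs i)

lemma measure_mul_setLAverage_le (t : Set X) (f : X → ℝ≥0∞) :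
    μ t * ⨍⁻ y in t, f y ∂μ ≤ ∫⁻ y in t, f y ∂μ := by
  rw [setLAverage_eq]
  exact ENNReal.mul_div_le

lemma maximalFunction_le_add_const (hg : Measurable g) {c : ℝ≥0∞} (h : ∀ x, f x ≤ g x + c)
    (x : X) : maximalFunction μ s f x ≤ maximalFunction μ s g x + c := by
  refine maximalFunction_le fun i hx => ?_
  calc ⨍⁻ y in s i, f y ∂μ ≤ (∫⁻ y in s i, (g y + c) ∂μ) / μ (s i) := by
        rw [setLAverage_eq]
        gcongr
        exact h _
    _ = ⨍⁻ y in s i, g y ∂μ + c * μ (s i) / μ (s i) := by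
        rw [lintegral_add_left hg, setLIntegral_const, ENNReal.add_div, setLAverage_eq]
    _ ≤ maximalFunction μ s g x + c :=
        add_le_add (setLAverage_le_maximalFunction hx) (ENNReal.div_le_of_le_mul le_rfl)

lemma IsLaminar.mul_measure_biUnion_le (hlam : IsLaminar s) (hs : ∀ i, MeasurableSet (s i))
    {c : ℝ≥0∞} {I : Finset κ} (h : ∀ i ∈ I, c * μ (s i) ≤ ∫⁻ x in s i, f x ∂μ) :
    c * μ (⋃ i ∈ I, s i) ≤ ∫⁻ x, f x ∂μ := by
  obtain ⟨J, hJI, hdisj, hJ⟩ := hlam.exists_pairwiseDisjoint_biUnion_eq I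
  calc c * μ (⋃ i ∈ I, s i) = ∑ i ∈ J, c * μ (s i) := by
        rw [← hJ, measure_biUnion_finset hdisj fun i _ => hs i, Finset.mul_sum]
    _ ≤ ∑ i ∈ J, ∫⁻ x in s i, f x ∂μ := Finset.sum_le_sum fun i hi => h i (hJI hi)
    _ = ∫⁻ x in ⋃ i ∈ J, s i, f x ∂μ :=
        (lintegral_biUnion_finset hdisj (fun i _ => hs i) f).symm
    _ ≤ ∫⁻ x, f x ∂μ := setLIntegral_le_lintegral _ _

theorem IsLaminar.mul_meas_lt_maximalFunction_le [Countable κ] (hlam : IsLaminar s)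
    (hs : ∀ i, MeasurableSet (s i)) (f : X → ℝ≥0∞) (c : ℝ≥0∞) :
    c * μ {x | c < maximalFunction μ s f x} ≤ ∫⁻ x, f x ∂μ := by
  have hlam' : IsLaminar fun i : {i // c < ⨍⁻ y in s i, f y ∂μ} => s i := fun i j => hlam i j
  have hmono : Monotone fun I : Finset {i // c < ⨍⁻ y in s i, f y ∂μ} => ⋃ i ∈ I, s i :=
    fun I J hIJ => biUnion_subset_biUnion_left hIJ
  rw [setOf_lt_maximalFunction, iUnion_eq_iUnion_finset, hmono.directed_le.measure_iUnion,
    ENNReal.mul_iSup]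
  refine iSup_le fun I => hlam'.mul_measure_biUnion_le (fun i => hs i) fun i _ => ?_
  calc c * μ (s i) ≤ μ (s i) * ⨍⁻ y in s i, f y ∂μ := by
        rw [mul_comm]
        gcongr
        exact i.2.le
    _ ≤ ∫⁻ y in s i, f y ∂μ := measure_mul_setLAverage_le _ _

theorem IsLaminar.mul_meas_lt_maximalFunction_le_setLIntegral [Countable κ] (hlam : IsLaminar s)
    (hs : ∀ i, MeasurableSet (s i)) (hf : Measurable f) (c : ℝ≥0∞) :
    c * μ {x | c < maximalFunction μ s f x} ≤ 2 * ∫⁻ x in {x | c < 2 * f x}, f x ∂μ := by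
  set E := {x | c < 2 * f x}
  have hE : MeasurableSet E := measurableSet_lt measurable_const (hf.const_mul 2)
  -- Discarding the part of `f` below `c / 2` lowers the maximal function by at most `c / 2`.
  set g := E.indicator f
  have hfg : ∀ x, f x ≤ g x + c / 2 := by
    intro x
    by_cases hx : x ∈ E
    · exact (indicator_of_mem hx f).ge.trans le_self_add
    · refine le_add_left ?_
      rw [ENNReal.le_div_iff_mul_le (by simp) (by simp), mul_comm]
      exact not_lt.1 hx
  have hsub : {x | c < maximalFunction μ s f x} ⊆ {x | c / 2 < maximalFunction μ s g x} := by
    intro x (hx : c < _)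
    have hlt : c / 2 + c / 2 < maximalFunction μ s g x + c / 2 := by
      rw [ENNReal.add_halves]
      exact hx.trans_le (maximalFunction_le_add_const (hf.indicator hE) hfg x)
    exact lt_of_add_lt_add_right hlt
  calc c * μ {x | c < maximalFunction μ s f x}
      ≤ 2 * (c / 2 * μ {x | c / 2 < maximalFunction μ s g x}) := by
        rw [← mul_assoc, ENNReal.mul_div_cancel two_ne_zero ENNReal.ofNat_ne_top]
        gcongr
    _ ≤ 2 * ∫⁻ x, g x ∂μ := by
        gcongr
        exact hlam.mul_meas_lt_maximalFunction_le hs g _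
    _ = 2 * ∫⁻ x in E, f x ∂μ := by rw [lintegral_indicator hE]

/-- The maximal function of the family `s` satisfies a strong type `(q, q)` estimate on
nonnegative functions; `C` is the constant for the `q`-th powers of the norms. -/
def HasMaximalBound (μ : Measure X) (s : κ → Set X) (q : ℝ) (C : ℝ≥0∞) : Prop :=
  ∀ f : X → ℝ≥0∞, Measurable f →
    ∫⁻ x, maximalFunction μ s f x ^ q ∂μ ≤ C * ∫⁻ x, f x ^ q ∂μ

theorem IsLaminar.hasMaximalBound [Countable κ] (hlam : IsLaminar s)
    (hs : ∀ i, MeasurableSet (s i)) {q : ℝ} (hq : 1 < q) :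
    HasMaximalBound μ s q (ENNReal.ofReal (q / (q - 1)) * 2 ^ q) := by
  intro f hf
  rw [rpow_eq_self_mul_rpow_sub_one 2 hq.le, ← mul_assoc]
  exact lintegral_rpow_le_of_mul_meas_ofReal_lt_le hf (measurable_maximalFunction hs) 2 2 hq
    fun t _ => hlam.mul_meas_lt_maximalFunction_le_setLIntegral hs hf _

end MaximalFunction

section Product

variable {ι : Type*} {X κ : ι → Type*} [∀ i, MeasurableSpace (X i)]
  {μ : ∀ i, Measure (X i)} {s : ∀ i, κ i → Set (X i)} {f : (∀ i, X i) → ℝ≥0∞} {q : ℝ}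

/-- The maximal function in the `i`-th variable alone of a function on a product space. -/
def coordMaximalFunction [DecidableEq ι] (i : ι) (μ : Measure (X i)) (s : κ i → Set (X i))
    (f : (∀ j, X j) → ℝ≥0∞) (x : ∀ j, X j) : ℝ≥0∞ :=
  maximalFunction μ s (fun t => f (Function.update x i t)) (x i)

lemma measurable_coordMaximalFunction [DecidableEq ι] (i : ι) [SFinite (μ i)] [Countable (κ i)]
    (hs : ∀ j, MeasurableSet (s i j)) (hf : Measurable f) :
    Measurable (coordMaximalFunction i (μ i) (s i) f) := by
  have hslice : Measurable fun p : (∀ j, X j) × X i => f (Function.update p.1 i p.2) :=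
    hf.comp measurable_update'
  have havg (j : κ i) :
      Measurable fun x : ∀ j, X j => ⨍⁻ t in s i j, f (Function.update x i t) ∂μ i := by
    simp only [setLAverage_eq]
    exact hslice.lintegral_prod_right'.div_const _
  exact Measurable.iSup fun j => (havg j).indicator (measurable_pi_apply i (hs j))

lemma setLIntegral_update_le_mul_coordMaximalFunction [DecidableEq ι] {i : ι} {j : κ i}
    (hfin : μ i (s i j) ≠ ∞) {x : ∀ j, X j} (hx : x i ∈ s i j) :
    ∫⁻ t in s i j, f (Function.update x i t) ∂μ i ≤
      μ i (s i j) * coordMaximalFunction i (μ i) (s i) f x := by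
  rw [← measure_mul_setLAverage _ hfin]
  gcongr
  exact setLAverage_le_maximalFunction hx

variable [Fintype ι] [∀ i, SigmaFinite (μ i)] [∀ i, Countable (κ i)]

lemma HasMaximalBound.lintegral_coordMaximalFunction_rpow_le [DecidableEq ι] {i : ι} {C : ℝ≥0∞}
    (hM : HasMaximalBound (μ i) (s i) q C) (hs : ∀ j, MeasurableSet (s i j)) (hf : Measurable f) :
    ∫⁻ x, coordMaximalFunction i (μ i) (s i) f x ^ q ∂Measure.pi μ ≤
      C * ∫⁻ x, f x ^ q ∂Measure.pi μ := by
  rw [← lintegral_const_mul _ (by fun_prop)]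
  refine lintegral_le_of_lmarginal_le {i}
    ((measurable_coordMaximalFunction i hs hf).pow_const q) (by fun_prop) fun x => ?_
  have hslice : Measurable fun t => f (Function.update x i t) := hf.comp (measurable_update x)
  simpa only [lmarginal_singleton, coordMaximalFunction, Function.update_idem,
    Function.update_self, lintegral_const_mul _ (hslice.pow_const q)] using hM _ hslice

lemma exists_lmarginal_restrict_le_prod_mul [DecidableEq ι] {C : ι → ℝ≥0∞}
    (hM : ∀ i, HasMaximalBound (μ i) (s i) q (C i)) (hs : ∀ i j, MeasurableSet (s i j))
    (hfin : ∀ i j, μ i (s i j) ≠ ∞) (hf : Measurable f) (T : Finset ι) :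
    ∃ h : (∀ i, X i) → ℝ≥0∞, Measurable h ∧
      ∫⁻ x, h x ^ q ∂Measure.pi μ ≤ (∏ i ∈ T, C i) * ∫⁻ x, f x ^ q ∂Measure.pi μ ∧
      ∀ R : ∀ i, κ i, ∀ x ∈ univ.pi fun i => s i (R i),
        (∫⋯∫⁻_T, f ∂fun i => (μ i).restrict (s i (R i))) x ≤
          (∏ i ∈ T, μ i (s i (R i))) * h x := by
  -- `h` is obtained by applying the maximal functions of the variables in `T` one after another.
  induction T using Finset.induction_on with
  | empty => exact ⟨f, hf, by simp, by simp⟩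
  | insert i T hi ih =>
    obtain ⟨h, hmeas, hbound, hdom⟩ := ih
    refine ⟨coordMaximalFunction i (μ i) (s i) h, measurable_coordMaximalFunction i (hs i) hmeas,
      ?_, fun R x hx => ?_⟩
    · rw [Finset.prod_insert hi, mul_assoc]
      exact ((hM i).lintegral_coordMaximalFunction_rpow_le (hs i) hmeas).trans (by gcongr)
    · have hslice : Measurable fun t => h (Function.update x i t) :=
        hmeas.comp (measurable_update x)
      calc (∫⋯∫⁻_insert i T, f ∂fun i => (μ i).restrict (s i (R i))) x
          = ∫⁻ t in s i (R i), (∫⋯∫⁻_T, f ∂fun i => (μ i).restrict (s i (R i)))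
              (Function.update x i t) ∂μ i := lmarginal_insert _ hf hi x
        _ ≤ ∫⁻ t in s i (R i),
              (∏ i ∈ T, μ i (s i (R i))) * h (Function.update x i t) ∂μ i :=
            setLIntegral_mono' (hs i _) fun t ht =>
              hdom R _ ((update_mem_pi_iff_of_mem hx).2 fun _ => ht)
        _ = (∏ i ∈ T, μ i (s i (R i))) * ∫⁻ t in s i (R i), h (Function.update x i t) ∂μ i :=
            lintegral_const_mul _ hslice
        _ ≤ (∏ i ∈ T, μ i (s i (R i))) *
              (μ i (s i (R i)) * coordMaximalFunction i (μ i) (s i) h x) := by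
            gcongr
            exact setLIntegral_update_le_mul_coordMaximalFunction (hfin i _) (hx i (mem_univ i))
        _ = (∏ i ∈ insert i T, μ i (s i (R i))) * coordMaximalFunction i (μ i) (s i) h x := by
            rw [Finset.prod_insert hi]
            ring

theorem HasMaximalBound.pi {C : ι → ℝ≥0∞} (hq : 0 ≤ q)
    (hM : ∀ i, HasMaximalBound (μ i) (s i) q (C i)) (hs : ∀ i j, MeasurableSet (s i j))
    (hfin : ∀ i j, μ i (s i j) ≠ ∞) :
    HasMaximalBound (Measure.pi μ) (fun R : ∀ i, κ i => univ.pi fun i => s i (R i)) q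
      (∏ i, C i) := by
  classical
  intro f hf
  obtain ⟨h, -, hbound, hdom⟩ := exists_lmarginal_restrict_le_prod_mul hM hs hfin hf Finset.univ
  refine le_trans (lintegral_mono fun x => ?_) hbound
  refine ENNReal.rpow_le_rpow (maximalFunction_le fun R hx => ?_) hq
  rw [setLAverage_eq, Measure.restrict_pi_pi, Measure.pi_pi]
  exact ENNReal.div_le_of_le_mul' (by simpa only [lmarginal_univ] using hdom R x hx)

end Product

section Carleson

variable {X κ : Type*} [MeasurableSpace X]

/-- The Carleson condition with constant `A` for weights `a` on the members of a family `s`.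
Only finite subfamilies are tested, which makes the condition independent of summability. -/
def IsCarleson (μ : Measure X) (s : κ → Set X) (a : κ → ℝ≥0∞) (A : ℝ≥0∞) : Prop :=
  ∀ I : Finset κ, ∑ i ∈ I, a i ≤ A * μ (⋃ i ∈ I, s i)

/-- The function `∑_{i ∈ I} a_i |s_i|⁻¹ 1_{s_i}`, obtained by spreading each weight `a i` evenly
over `s i`. -/
def balayage (μ : Measure X) (s : κ → Set X) (a : κ → ℝ≥0∞) (I : Finset κ) (x : X) : ℝ≥0∞ :=
  ∑ i ∈ I, (s i).indicator (fun _ => a i / μ (s i)) x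

variable {μ : Measure X} {s : κ → Set X} {a : κ → ℝ≥0∞} {A : ℝ≥0∞} {f : X → ℝ≥0∞}

lemma measurable_balayage (hs : ∀ i, MeasurableSet (s i)) (I : Finset κ) :
    Measurable (balayage μ s a I) :=
  Finset.measurable_sum I fun i _ => measurable_const.indicator (hs i)

lemma balayage_mono {I J : Finset κ} (hIJ : I ⊆ J) (x : X) :
    balayage μ s a I x ≤ balayage μ s a J x :=
  Finset.sum_le_sum_of_subset hIJ

lemma lintegral_balayage_mul (hs : ∀ i, MeasurableSet (s i)) (hf : Measurable f) (I : Finset κ) :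
    ∫⁻ x, balayage μ s a I x * f x ∂μ = ∑ i ∈ I, a i * ⨍⁻ x in s i, f x ∂μ := by
  calc ∫⁻ x, balayage μ s a I x * f x ∂μ
      = ∫⁻ x, ∑ i ∈ I, (s i).indicator (fun x => a i / μ (s i) * f x) x ∂μ := by
        simp only [balayage, Finset.sum_mul, indicator_mul_left]
    _ = ∑ i ∈ I, ∫⁻ x in s i, a i / μ (s i) * f x ∂μ := by
        rw [lintegral_finsetSum _ fun i _ => (hf.const_mul _).indicator (hs i)]
        exact Finset.sum_congr rfl fun i _ => lintegral_indicator (hs i) _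
    _ = ∑ i ∈ I, a i * ⨍⁻ x in s i, f x ∂μ := by
        refine Finset.sum_congr rfl fun i _ => ?_
        rw [lintegral_const_mul _ hf, setLAverage_eq, ENNReal.mul_comm_div]

theorem IsCarleson.sum_mul_le (ha : IsCarleson μ s a A) (hf : Measurable f) {c : κ → ℝ≥0∞}
    {I : Finset κ} (hcf : ∀ i ∈ I, ∀ x ∈ s i, c i ≤ f x) :
    ∑ i ∈ I, a i * c i ≤ A * ∫⁻ x in ⋃ i ∈ I, s i, f x ∂μ := by
  classical
  let _ : MeasurableSpace κ := ⊤
  -- Layer cake for the measure `∑ aᵢ δᵢ`: the sets `s i` with `t < c i` lie in `{t < f}`.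
  set ν : Measure κ := ∑ i ∈ I, a i • Measure.dirac i
  have hν : ∫⁻ i, c i ∂ν = ∑ i ∈ I, a i * c i := by
    simp [ν, lintegral_finsetSum_measure]
  rw [← hν]
  refine lintegral_le_of_forall_meas_ofReal_lt_le measurable_from_top hf A fun t _ => ?_
  set I' := I.filter fun i => ENNReal.ofReal t < c i
  calc ν {i | ENNReal.ofReal t < c i} = ∑ i ∈ I', a i := by
        simp [ν, I', Finset.sum_filter, indicator_apply]
    _ ≤ A * μ (⋃ i ∈ I', s i) := ha I'
    _ ≤ A * μ.restrict (⋃ i ∈ I, s i) {x | ENNReal.ofReal t < f x} := by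
        rw [Measure.restrict_apply (measurableSet_lt measurable_const hf)]
        gcongr
        refine iUnion₂_subset fun i hi x hx => ?_
        obtain ⟨hiI, hti⟩ := Finset.mem_filter.1 hi
        exact ⟨hti.trans_le (hcf i hiI x hx), mem_biUnion (t := s) hiI hx⟩

variable {p q : ℝ}

lemma IsCarleson.balayage_le_indicator (ha : IsCarleson μ s a A) (I : Finset κ) (x : X) :
    balayage μ s a I x ≤ (⋃ i ∈ I, s i).indicator (fun _ => I.card * A) x := by
  have hdensity (i : κ) : a i / μ (s i) ≤ A :=
    ENNReal.div_le_of_le_mul (by simpa using ha {i})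
  by_cases hx : x ∈ ⋃ i ∈ I, s i
  · rw [indicator_of_mem hx, ← nsmul_eq_mul]
    exact Finset.sum_le_card_nsmul I _ A fun i _ =>
      indicator_apply_le' (fun _ => hdensity i) fun _ => zero_le
  · rw [indicator_of_notMem hx]
    exact (Finset.sum_eq_zero fun i hi =>
      indicator_of_notMem (fun hxi => hx (mem_biUnion (t := s) hi hxi)) _).le

lemma IsCarleson.lintegral_balayage_rpow_ne_top (ha : IsCarleson μ s a A) (hA : A ≠ ∞)
    (hs : ∀ i, MeasurableSet (s i)) (hfin : ∀ i, μ (s i) ≠ ∞) (hp : 0 < p) (I : Finset κ) :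
    ∫⁻ x, balayage μ s a I x ^ p ∂μ ≠ ∞ := by
  set S := ⋃ i ∈ I, s i
  have hS : MeasurableSet S := I.measurableSet_biUnion fun i _ => hs i
  have hμS : μ S ≠ ∞ := (measure_biUnion_lt_top I.finite_toSet fun i _ => (hfin i).lt_top).ne
  have hle (x : X) : balayage μ s a I x ^ p ≤ S.indicator (fun _ => (I.card * A) ^ p) x := by
    refine (ENNReal.rpow_le_rpow (ha.balayage_le_indicator I x) hp.le).trans_eq ?_
    by_cases hx : x ∈ S <;> simp [S, hx, hp]
  refine ne_top_of_le_ne_top ?_ (lintegral_mono hle)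
  rw [lintegral_indicator_const hS]
  finiteness

lemma le_rpow_of_le_mul_rpow_one_div (hpq : p.HolderConjugate q) {x c : ℝ≥0∞} (hx : x ≠ ∞)
    (h : x ≤ c * x ^ (1 / q)) : x ≤ c ^ p := by
  rcases eq_or_ne x 0 with rfl | hx₀
  · exact zero_le
  have hadd : 1 / p + 1 / q = 1 := by simpa only [one_div] using hpq.inv_add_inv_eq_one
  have hroot : x ^ (1 / p) * x ^ (1 / q) ≤ c * x ^ (1 / q) := by
    rwa [← ENNReal.rpow_add _ _ hx₀ hx, hadd, ENNReal.rpow_one]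
  rw [ENNReal.mul_le_mul_iff_left (by simp [hx₀, hx])
    (ENNReal.rpow_ne_top_of_nonneg hpq.symm.one_div_pos.le hx)] at hroot
  calc x = (x ^ (1 / p)) ^ p := by
        rw [← ENNReal.rpow_mul, one_div_mul_cancel hpq.ne_zero, ENNReal.rpow_one]
    _ ≤ c ^ p := ENNReal.rpow_le_rpow hroot hpq.nonneg

lemma rpow_tsum_eq_iSup_rpow_balayage (hp : 0 < p) (U : Set κ) (x : X) :
    (∑' i : U, (s i).indicator (fun _ => a i / μ (s i)) x) ^ p =
      ⨆ I : Finset U, balayage μ s a (I.map (Function.Embedding.subtype _)) x ^ p := by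
  simp only [balayage, Finset.sum_map, Function.Embedding.subtype_apply]
  rw [ENNReal.tsum_eq_iSup_sum]
  exact (ENNReal.orderIsoRpow p hp).map_iSup _

lemma enorm_div_toReal_le (x : ℝ) (m : ℝ≥0∞) : ‖x / m.toReal‖ₑ ≤ ‖x‖ₑ / m := by
  rcases eq_or_ne m 0 with rfl | hm₀
  · simp
  rcases eq_or_ne m ∞ with rfl | hm
  · simp
  rw [div_eq_mul_inv, enorm_mul, enorm_inv (ENNReal.toReal_ne_zero.2 ⟨hm₀, hm⟩),
    Real.enorm_of_nonneg ENNReal.toReal_nonneg, ENNReal.ofReal_toReal hm, div_eq_mul_inv]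

lemma enorm_tsum_indicator_div_toReal_le (w : κ → ℝ) (U : Set κ) (x : X) :
    ‖∑' i : U, (s i).indicator (fun _ => w i / (μ (s i)).toReal) x‖ₑ ≤
      ∑' i : U, (s i).indicator (fun _ => ‖w i‖ₑ / μ (s i)) x := by
  refine enorm_tsum_le_tsum_enorm.trans (ENNReal.tsum_le_tsum fun i => ?_)
  rw [enorm_indicator_eq_indicator_enorm]
  exact indicator_le_indicator (enorm_div_toReal_le _ _)

variable [Countable κ] {K : ℝ≥0∞}

theorem IsCarleson.lintegral_balayage_mul_le (ha : IsCarleson μ s a A)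
    (hs : ∀ i, MeasurableSet (s i)) (hpq : p.HolderConjugate q) (hM : HasMaximalBound μ s q K)
    (hf : Measurable f) (I : Finset κ) :
    ∫⁻ x, balayage μ s a I x * f x ∂μ ≤
      A * (μ (⋃ i ∈ I, s i) ^ (1 / p) * (K * ∫⁻ x, f x ^ q ∂μ) ^ (1 / q)) := by
  set S := ⋃ i ∈ I, s i
  have hMf : Measurable (maximalFunction μ s f) := measurable_maximalFunction hs
  calc ∫⁻ x, balayage μ s a I x * f x ∂μ = ∑ i ∈ I, a i * ⨍⁻ x in s i, f x ∂μ :=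
        lintegral_balayage_mul hs hf I
    _ ≤ A * ∫⁻ x in S, maximalFunction μ s f x ∂μ :=
        ha.sum_mul_le hMf fun _ _ _ hx => setLAverage_le_maximalFunction hx
    _ ≤ A * (μ S ^ (1 / p) * (∫⁻ x in S, maximalFunction μ s f x ^ q ∂μ) ^ (1 / q)) := by
        gcongr
        simpa using ENNReal.lintegral_mul_le_Lp_mul_Lq (μ.restrict S) hpq
          (aemeasurable_const (b := 1)) hMf.aemeasurable
    _ ≤ A * (μ S ^ (1 / p) * (K * ∫⁻ x, f x ^ q ∂μ) ^ (1 / q)) := by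
        have := hpq.symm.pos
        gcongr
        exact (setLIntegral_le_lintegral S _).trans (hM f hf)

theorem IsCarleson.lintegral_balayage_rpow_le (ha : IsCarleson μ s a A) (hA : A ≠ ∞)
    (hs : ∀ i, MeasurableSet (s i)) (hfin : ∀ i, μ (s i) ≠ ∞) (hpq : p.HolderConjugate q)
    (hM : HasMaximalBound μ s q K) (I : Finset κ) :
    ∫⁻ x, balayage μ s a I x ^ p ∂μ ≤ (K ^ (1 / q) * A) ^ p * μ (⋃ i ∈ I, s i) := by
  set F := balayage μ s a I
  set S := ⋃ i ∈ I, s i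
  have hF : Measurable F := measurable_balayage hs I
  have hdual : ∫⁻ x, F x ^ p ∂μ ≤
      (K ^ (1 / q) * A * μ S ^ (1 / p)) * (∫⁻ x, F x ^ p ∂μ) ^ (1 / q) := by
    calc ∫⁻ x, F x ^ p ∂μ = ∫⁻ x, F x * F x ^ (p - 1) ∂μ := by
          simp only [← rpow_eq_self_mul_rpow_sub_one _ hpq.lt.le]
      _ ≤ A * (μ S ^ (1 / p) * (K * ∫⁻ x, (F x ^ (p - 1)) ^ q ∂μ) ^ (1 / q)) :=
          ha.lintegral_balayage_mul_le hs hpq hM (hF.pow_const _) I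
      _ = _ := by
          simp only [← ENNReal.rpow_mul, hpq.sub_one_mul_conj]
          rw [ENNReal.mul_rpow_of_nonneg _ _ hpq.symm.one_div_nonneg]
          ring
  refine (le_rpow_of_le_mul_rpow_one_div hpq
    (ha.lintegral_balayage_rpow_ne_top hA hs hfin hpq.pos I) hdual).trans_eq ?_
  rw [ENNReal.mul_rpow_of_nonneg _ _ hpq.nonneg, ← ENNReal.rpow_mul,
    one_div_mul_cancel hpq.ne_zero, ENNReal.rpow_one]

theorem IsCarleson.lintegral_tsum_rpow_le (ha : IsCarleson μ s a A) (hA : A ≠ ∞)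
    (hs : ∀ i, MeasurableSet (s i)) (hfin : ∀ i, μ (s i) ≠ ∞) (hpq : p.HolderConjugate q)
    (hM : HasMaximalBound μ s q K) (U : Set κ) :
    ∫⁻ x, (∑' i : U, (s i).indicator (fun _ => a i / μ (s i)) x) ^ p ∂μ ≤
      (K ^ (1 / q) * A) ^ p * μ (⋃ i ∈ U, s i) := by
  simp only [rpow_tsum_eq_iSup_rpow_balayage hpq.pos]
  rw [lintegral_iSup_directed_of_measurable (fun I => (measurable_balayage hs _).pow_const p)
    (Monotone.directed_le fun I J hIJ x =>
      ENNReal.rpow_le_rpow (balayage_mono (Finset.map_subset_map.2 hIJ) x) hpq.nonneg)]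
  refine iSup_le fun I => ?_
  have hsub : ⋃ i ∈ I.map (Function.Embedding.subtype (· ∈ U)), s i ⊆ ⋃ i ∈ U, s i :=
    biUnion_subset_biUnion_left fun i hi => by
      obtain ⟨j, -, rfl⟩ := Finset.mem_map.1 hi
      exact j.2
  exact (ha.lintegral_balayage_rpow_le hA hs hfin hpq hM _).trans
    (mul_le_mul' le_rfl (measure_mono hsub))

theorem IsCarleson.eLpNorm_tsum_le {w : κ → ℝ} (hw : IsCarleson μ s (fun i => ‖w i‖ₑ) A)
    (hA : A ≠ ∞) (hs : ∀ i, MeasurableSet (s i)) (hfin : ∀ i, μ (s i) ≠ ∞)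
    (hpq : p.HolderConjugate q) (hM : HasMaximalBound μ s q K) (U : Set κ) :
    eLpNorm (fun x => ∑' i : U, (s i).indicator (fun _ => w i / (μ (s i)).toReal) x)
      (ENNReal.ofReal p) μ ≤ K ^ (1 / q) * A * μ (⋃ i ∈ U, s i) ^ (1 / p) := by
  have hp := hpq.pos
  rw [eLpNorm_eq_lintegral_rpow_enorm_toReal (by simpa using hp) ENNReal.ofReal_ne_top,
    ENNReal.toReal_ofReal hp.le]
  calc _ ≤ ((K ^ (1 / q) * A) ^ p * μ (⋃ i ∈ U, s i)) ^ (1 / p) := by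
        refine ENNReal.rpow_le_rpow (le_trans (lintegral_mono fun x => ?_)
          (hw.lintegral_tsum_rpow_le hA hs hfin hpq hM U)) hpq.one_div_nonneg
        exact ENNReal.rpow_le_rpow (enorm_tsum_indicator_div_toReal_le w U x) hp.le
    _ = K ^ (1 / q) * A * μ (⋃ i ∈ U, s i) ^ (1 / p) := by
        rw [ENNReal.mul_rpow_of_nonneg _ _ hpq.one_div_nonneg, ← ENNReal.rpow_mul,
          mul_one_div_cancel hp.ne', ENNReal.rpow_one]

end Carleson

section Dyadic

lemma mem_dI {j k : ℤ} {x : ℝ} : x ∈ dI j k ↔ ⌊x / 2 ^ k⌋ = j := by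
  have hpos : (0 : ℝ) < 2 ^ k := by positivity
  rw [dI, mem_Ico, Int.floor_eq_iff, le_div_iff₀ hpos, div_lt_iff₀ hpos]

lemma dI_subset_dI_of_le {i j k l : ℤ} (hkl : k ≤ l) (h : ¬ Disjoint (dI i k) (dI j l)) :
    dI i k ⊆ dI j l := by
  obtain ⟨x, hxi, hxj⟩ := not_disjoint_iff.1 h
  obtain ⟨n, rfl⟩ := Int.le.dest hkl
  have hfloor (z : ℝ) : ⌊z / 2 ^ (k + (n : ℤ))⌋ = ⌊z / 2 ^ k⌋ / (2 ^ n : ℕ) := by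
    rw [zpow_add₀ two_ne_zero, zpow_natCast, ← div_div, ← Int.floor_div_natCast]
    push_cast
    rfl
  intro y hy
  rw [mem_dI] at hy hxi hxj ⊢
  rw [hfloor, hy, ← hxi, ← hfloor, hxj]

lemma isLaminar_dI : IsLaminar fun z : ℤ × ℤ => dI z.1 z.2 := by
  refine fun z w => or_iff_not_imp_left.2 fun h => ?_
  rcases le_total z.2 w.2 with hzw | hwz
  · exact Or.inl (dI_subset_dI_of_le hzw h)
  · exact Or.inr (dI_subset_dI_of_le hwz fun hdisj => h hdisj.symm)

lemma measurableSet_dI (j k : ℤ) : MeasurableSet (dI j k) :=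
  measurableSet_Ico

lemma volume_dI (j k : ℤ) : volume (dI j k) = ENNReal.ofReal (2 ^ k) := by
  rw [dI, Real.volume_Ico]
  ring_nf

lemma volume_dI_ne_top (j k : ℤ) : volume (dI j k) ≠ ∞ :=
  volume_dI j k ▸ ENNReal.ofReal_ne_top

variable {d : ℕ}

lemma measurableSet_rectD (R : RectD d) : MeasurableSet (rectD R) :=
  .univ_pi fun _ => measurableSet_dI _ _

lemma volume_rectD (R : RectD d) : volume (rectD R) = ∏ i, ENNReal.ofReal (2 ^ (R i).2) := by
  simp only [rectD, volume_pi_pi, volume_dI]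

lemma volume_rectD_ne_top (R : RectD d) : volume (rectD R) ≠ ∞ :=
  volume_rectD R ▸ ENNReal.prod_ne_top fun _ _ => ENNReal.ofReal_ne_top

lemma volume_rectD_pos (R : RectD d) : 0 < volume (rectD R) := by
  rw [volume_rectD, CanonicallyOrderedAdd.prod_pos]
  exact fun i _ => ENNReal.ofReal_pos.2 (by positivity)

theorem hasMaximalBound_rectD {q : ℝ} (hq : 1 < q) :
    HasMaximalBound volume (rectD (d := d)) q ((ENNReal.ofReal (q / (q - 1)) * 2 ^ q) ^ d) := by
  have hpi := HasMaximalBound.pi (ι := Fin d) (zero_le_one.trans hq.le)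
    (fun _ => isLaminar_dI.hasMaximalBound (μ := volume) (fun z => measurableSet_dI z.1 z.2) hq)
    (fun _ z => measurableSet_dI z.1 z.2) fun _ z => volume_dI_ne_top z.1 z.2
  rwa [Finset.prod_const, Finset.card_univ, Fintype.card_fin] at hpi

lemma isCarleson_rectD {α : RectD d → ℝ} (hα : ∀ R, 0 ≤ α R) {A : ℝ}
    (hA : ∀ 𝓥 : Set (RectD d), 0 < volume (shD 𝓥) → volume (shD 𝓥) < ∞ →
      ∑' R : 𝓥, α R ≤ A * (volume (shD 𝓥)).toReal) :
    IsCarleson volume rectD (fun R => ‖α R‖ₑ) (ENNReal.ofReal A) := by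
  intro I
  rcases I.eq_empty_or_nonempty with rfl | ⟨R, hR⟩
  · simp
  have hfin : volume (shD (I : Set (RectD d))) < ∞ :=
    measure_biUnion_lt_top I.finite_toSet fun R _ => (volume_rectD_ne_top R).lt_top
  have hpos : 0 < volume (shD (I : Set (RectD d))) :=
    (volume_rectD_pos R).trans_le
      (measure_mono (subset_biUnion_of_mem (u := rectD) (Finset.mem_coe.2 hR)))
  calc ∑ R ∈ I, ‖α R‖ₑ = ENNReal.ofReal (∑' R : (I : Set (RectD d)), α R) := by
        rw [Finset.tsum_subtype' I α, ENNReal.ofReal_sum_of_nonneg fun R _ => hα R]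
        exact Finset.sum_congr rfl fun R _ => Real.enorm_of_nonneg (hα R)
    _ ≤ ENNReal.ofReal (A * (volume (shD (I : Set (RectD d)))).toReal) :=
        ENNReal.ofReal_le_ofReal (hA I hpos hfin)
    _ = ENNReal.ofReal A * volume (⋃ R ∈ I, rectD R) := by
        rw [ENNReal.ofReal_mul' ENNReal.toReal_nonneg, ENNReal.ofReal_toReal hfin.ne]
        rfl

end Dyadic

/-- John–Nirenberg inequality for product Carleson measures: for
`1 < p < ∞` there is a constant `C_{p,d}` such that whenever `α : 𝒟^d → [0,∞)` has Carleson
norm at most `A` (i.e. `∑_{R ∈ 𝓥} α(R) ≤ A|sh 𝓥|` for every collection `𝓥` with shadow of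
finite positive measure), for all collections `𝓤` with shadow of finite positive measure,
`‖∑_{R ∈ 𝓤} (α(R)/|R|) 1_R‖_{L^p} ≤ C_{p,d} A |sh 𝓤|^{1/p}`. -/
theorem stmt_13 (d : ℕ) (hd : 1 ≤ d) (p : ℝ) (hp : 1 < p) :
    ∃ C : ℝ, 0 < C ∧ ∀ α : RectD d → ℝ, (∀ R, 0 ≤ α R) → ∀ A : ℝ,
      (∀ 𝓥 : Set (RectD d), 0 < volume (shD 𝓥) → volume (shD 𝓥) < ⊤ →
        ∑' R : 𝓥, α (R : RectD d) ≤ A * (volume (shD 𝓥)).toReal) →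
      ∀ 𝓤 : Set (RectD d), 0 < volume (shD 𝓤) → volume (shD 𝓤) < ⊤ →
        eLpNorm (fun x => ∑' R : 𝓤,
            Set.indicator (rectD (R : RectD d))
              (fun _ => α (R : RectD d) / (volume (rectD (R : RectD d))).toReal) x)
          (ENNReal.ofReal p) volume
        ≤ ENNReal.ofReal (C * A) * volume (shD 𝓤) ^ (1 / p) := by
  set q := p.conjExponent
  have hpq : p.HolderConjugate q := .conjExponent hp
  have hq₀ : 0 ≤ 1 / q := hpq.symm.one_div_nonneg
  set K : ℝ≥0∞ := (ENNReal.ofReal (q / (q - 1)) * 2 ^ q) ^ d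
  have hK : K ^ (1 / q) ≠ ∞ := by finiteness
  have hC : K ^ (1 / q) ≤ ENNReal.ofReal ((K ^ (1 / q)).toReal + 1) :=
    (ENNReal.le_ofReal_iff_toReal_le hK (by positivity)).2 (by linarith)
  refine ⟨(K ^ (1 / q)).toReal + 1, by positivity, fun α hα A hA 𝓤 _ _ => ?_⟩
  calc _ ≤ K ^ (1 / q) * ENNReal.ofReal A * volume (shD 𝓤) ^ (1 / p) :=
        (isCarleson_rectD hα hA).eLpNorm_tsum_le ENNReal.ofReal_ne_top measurableSet_rectD
          volume_rectD_ne_top hpq (hasMaximalBound_rectD hpq.symm.lt) 𝓤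
    _ ≤ _ := by
        rw [ENNReal.ofReal_mul (by positivity)]
        gcongr
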